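/- Let N ≥ 3, α ∈ (0, N), and p > (N+α)/(N−2). On the standard lattice ℤ^N (Cayley graph of ℤ^N with generators ±e₁, …, ±e_N), there exists a function u ∈ D^{1,2}(ℤ^N) with u(x) > 0 for every x ∈ ℤ^N solving the Choquard equation Δu(x) + (I_α ∗ u^p)(x)·u(x)^{p−1} = 0 for all x ∈ ℤ^N, where (I_α ∗ f)(x) := ∑_{y∈ℤ^N, y≠x} |x−y|^{α−N} f(y) with |·| the Euclidean norm. -/

import Mathlib

open Filter Topology

noncomputable section

namespace ChoquardZ

/-- Euclidean distance on the lattice `ℤ^N`. -/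
def zDist (N : ℕ) (x y : Fin N → ℤ) : ℝ :=
  Real.sqrt (∑ i, ((x i - y i : ℤ) : ℝ) ^ 2)

/-- The discrete Riesz potential convolution
`(I_α ∗ f)(x) = ∑_{y ≠ x} |x − y|^{α − N} f(y)`. -/
def rieszConv (N : ℕ) (α : ℝ) (f : (Fin N → ℤ) → ℝ) (x : Fin N → ℤ) : ℝ :=
  ∑' y, if y = x then 0 else zDist N x y ^ (α - (N : ℝ)) * f y

/-- The graph Laplacian on `ℤ^N` (neighbors differ by `±eᵢ`). -/
def zLap (N : ℕ) (u : (Fin N → ℤ) → ℝ) (x : Fin N → ℤ) : ℝ :=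
  ∑ i, ((u (Function.update x i (x i + 1)) - u x) +
    (u (Function.update x i (x i - 1)) - u x))

/-- `|∇u(x)|₂² = ∑_{y ∼ x} (u(y) − u(x))²` on `ℤ^N`. -/
def zGradSq (N : ℕ) (u : (Fin N → ℤ) → ℝ) (x : Fin N → ℤ) : ℝ :=
  ∑ i, ((u (Function.update x i (x i + 1)) - u x) ^ 2 +
    (u (Function.update x i (x i - 1)) - u x) ^ 2)

/-- `u ∈ ℓ^q(ℤ^N)`. -/
def zMemlp (N : ℕ) (q : ℝ) (u : (Fin N → ℤ) → ℝ) : Prop :=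
  Summable fun x => |u x| ^ q

/-- `u ∈ D^{1,2}(ℤ^N) = {u ∈ ℓ^{2N/(N−2)}(ℤ^N) : ‖u‖_{D^{1,2}} < ∞}`. -/
def zMemD12 (N : ℕ) (u : (Fin N → ℤ) → ℝ) : Prop :=
  zMemlp N (2 * (N : ℝ) / ((N : ℝ) - 2)) u ∧ Summable (zGradSq N u)

/-! ### Sobolev inequality -/

lemma update_eq_add {N : ℕ} (x : Fin N → ℤ) (i : Fin N) (c t : ℤ) :
    Function.update x i (t + c) = Function.update x i t + Pi.single i c := by
  ext j
  by_cases h : j = i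
  · subst h; simp
  · simp [h]

lemma update_eq_add' {N : ℕ} (x : Fin N → ℤ) (i : Fin N) (c : ℤ) :
    Function.update x i (x i + c) = x + Pi.single i c := by
  rw [update_eq_add]; simp

lemma one_dim_bound (h : ℤ → ℝ) (hh : h.support.Finite) (a : ℤ) :
    ENNReal.ofReal |h a| ≤ ∑' t, ENNReal.ofReal |h (t + 1) - h t| := by
  have hinj : Function.Injective (fun n : ℕ => a + (n : ℤ)) := by
    intro m n hmn; simpa using hmn
  obtain ⟨n, hn⟩ : ∃ n : ℕ, h (a + n) = 0 := by
    by_contra hcon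
    push Not at hcon
    have : (Set.range (fun n : ℕ => a + (n : ℤ))) ⊆ h.support := by
      rintro _ ⟨n, rfl⟩
      exact hcon n
    exact Set.infinite_range_of_injective hinj (hh.subset this)
  have h1 : |h a| ≤ ∑ k ∈ Finset.range n, |h (a + k + 1) - h (a + k)| := by
    have h2 := Finset.sum_range_sub (fun k : ℕ => h (a + k)) n
    simp only [hn, Nat.cast_add, Nat.cast_one, Nat.cast_zero, add_zero, zero_sub] at h2
    rw [← abs_neg, ← h2]
    refine (Finset.abs_sum_le_sum_abs _ _).trans (le_of_eq ?_)
    simp only [add_assoc]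
  calc ENNReal.ofReal |h a| ≤ ENNReal.ofReal (∑ k ∈ Finset.range n, |h (a + k + 1) - h (a + k)|) :=
        ENNReal.ofReal_le_ofReal h1
    _ = ∑ k ∈ Finset.range n, ENNReal.ofReal |h (a + k + 1) - h (a + k)| :=
        ENNReal.ofReal_sum_of_nonneg (fun _ _ => abs_nonneg _)
    _ ≤ ∑' k : ℕ, ENNReal.ofReal |h (a + k + 1) - h (a + k)| := ENNReal.sum_le_tsum _
    _ ≤ _ := ENNReal.tsum_comp_le_tsum_of_injective hinj
        (fun t => ENNReal.ofReal |h (t + 1) - h t|)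

lemma pi_count_eq (N : ℕ) :
    (MeasureTheory.Measure.pi (fun _ : Fin N => (MeasureTheory.Measure.count : MeasureTheory.Measure ℤ)))
      = MeasureTheory.Measure.count := by
  refine MeasureTheory.Measure.ext_of_singleton ?_
  intro x
  rw [MeasureTheory.Measure.pi_singleton]
  simp

lemma finite_support_shift {N : ℕ} {g : (Fin N → ℤ) → ℝ} (hg : g.support.Finite) (v : Fin N → ℤ) :
    (fun x => g (x + v)).support.Finite := by
  have : (fun x => g (x + v)).support = (fun x => x + v) ⁻¹' g.support := rfl
  rw [this]
  exact hg.preimage (add_left_injective v).injOn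

lemma summable_of_fs {ι : Type*} {g : ι → ℝ} (hg : g.support.Finite) : Summable g :=
  summable_of_hasFiniteSupport hg

lemma finite_support_diff {N : ℕ} {g : (Fin N → ℤ) → ℝ} (hg : g.support.Finite) (v : Fin N → ℤ) :
    (fun x => g (x + v) - g x).support.Finite :=
  ((finite_support_shift hg v).union hg).subset (Function.support_sub _ _)

lemma gagliardo {N : ℕ} (hN : 2 ≤ N) (g : (Fin N → ℤ) → ℝ) (hg0 : ∀ x, 0 ≤ g x)
    (hg : g.support.Finite) :
    ∑' x, g x ^ ((N : ℝ) / (N - 1)) ≤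
      (∑ i, ∑' x, |g (x + Pi.single i 1) - g x|) ^ ((N : ℝ) / (N - 1)) := by
  have hN' : (2 : ℝ) ≤ N := by exact_mod_cast hN
  set P : ℝ := (N : ℝ) / (N - 1) with hP
  have hP0 : 0 < P := by apply div_pos <;> linarith
  have hconj : Real.HolderConjugate (Fintype.card (Fin N)) P := by
    rw [Fintype.card_fin]
    exact Real.HolderConjugate.conjExponent (by linarith)
  set F : (Fin N → ℤ) → ENNReal := fun x => ∑ i, ENNReal.ofReal |g (x + Pi.single i 1) - g x| with hF
  have hline : ∀ x i, ENNReal.ofReal (g x) ≤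
      ∫⁻ t, F (Function.update x i t) ∂(MeasureTheory.Measure.count : MeasureTheory.Measure ℤ) := by
    intro x i
    rw [MeasureTheory.lintegral_count]
    have h1 := one_dim_bound (fun t => g (Function.update x i t))
      (hg.preimage (Function.update_injective x i).injOn) (x i)
    simp only [Function.update_eq_self, abs_of_nonneg (hg0 x)] at h1
    refine h1.trans (ENNReal.tsum_le_tsum fun t => ?_)
    rw [update_eq_add]
    exact Finset.single_le_sum (f := fun i => ENNReal.ofReal
      |g (Function.update x _ t + Pi.single i 1) - g (Function.update x _ t)|)
      (fun _ _ => zero_le) (Finset.mem_univ i)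
  have hgrid := MeasureTheory.lintegral_prod_lintegral_pow_le
    (μ := fun _ : Fin N => (MeasureTheory.Measure.count : MeasureTheory.Measure ℤ)) hconj
    (f := F) (measurable_of_countable _)
  rw [pi_count_eq, MeasureTheory.lintegral_count, MeasureTheory.lintegral_count] at hgrid
  have hsF : ∑' x, F x = ENNReal.ofReal (∑ i, ∑' x, |g (x + Pi.single i 1) - g x|) := by
    rw [ENNReal.ofReal_sum_of_nonneg (fun i _ => tsum_nonneg fun _ => abs_nonneg _)]
    rw [Summable.tsum_finsetSum (fun _ _ => ENNReal.summable)]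
    refine Finset.sum_congr rfl fun i _ => ?_
    rw [ENNReal.ofReal_tsum_of_nonneg (fun _ => abs_nonneg _)]
    exact (summable_of_fs (finite_support_diff hg _)).abs
  have hleft : ENNReal.ofReal (∑' x, g x ^ P) ≤
      (∑' x, F x) ^ P := by
    refine le_trans ?_ hgrid
    rw [ENNReal.ofReal_tsum_of_nonneg (fun x => Real.rpow_nonneg (hg0 x) _)]
    · refine ENNReal.tsum_le_tsum fun x => ?_
      calc ENNReal.ofReal (g x ^ P) = ∏ i : Fin N, ENNReal.ofReal (g x) ^ ((1 : ℝ) / ((Fintype.card (Fin N) : ℝ) - 1)) := by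
            rw [Finset.prod_const, Finset.card_univ, Fintype.card_fin, ← ENNReal.rpow_natCast,
              ← ENNReal.rpow_mul, ← ENNReal.ofReal_rpow_of_nonneg (hg0 x) hP0.le]
            congr 1
            rw [hP]; ring
        _ ≤ _ := by
            refine Finset.prod_le_prod' fun i _ => ?_
            refine ENNReal.rpow_le_rpow (hline x i) ?_
            rw [Fintype.card_fin]
            apply div_nonneg <;> linarith
    · refine summable_of_fs (hg.subset ?_)
      intro x hx hx0
      apply hx
      simp only [hx0]
      exact Real.zero_rpow hP0.ne'
  have hnn : 0 ≤ ∑ i, ∑' x, |g (x + Pi.single i 1) - g x| :=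
    Finset.sum_nonneg fun i _ => tsum_nonneg fun _ => abs_nonneg _
  rw [hsF, ENNReal.ofReal_rpow_of_nonneg hnn hP0.le] at hleft
  exact (ENNReal.ofReal_le_ofReal_iff (Real.rpow_nonneg hnn _)).1 hleft

lemma rpow_diff_le_aux {a b γ : ℝ} (hb : 0 ≤ b) (hab : b ≤ a) (hγ : 1 ≤ γ) :
    a ^ γ - b ^ γ ≤ γ * a ^ (γ - 1) * (a - b) := by
  rcases eq_or_lt_of_le (hb.trans hab) with h | ha
  · have : b = 0 := le_antisymm (h ▸ hab) hb
    subst this; simp [← h]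
  · have h1 := one_add_mul_self_le_rpow_one_add (s := b / a - 1) (by
      have : 0 ≤ b / a := by positivity
      linarith) hγ
    rw [add_sub_cancel, Real.div_rpow hb ha.le] at h1
    have hpos : 0 < a ^ γ := Real.rpow_pos_of_pos ha _
    rw [le_div_iff₀ hpos] at h1
    have h2 : a ^ γ = a ^ (γ - 1) * a := by
      rw [← Real.rpow_add_one ha.ne']; simp
    have h3 : (1 + γ * (b / a - 1)) * a ^ γ = a ^ γ + γ * a ^ (γ - 1) * (b - a) := by
      rw [h2]; field_simp
    linarith

lemma rpow_diff_le {a b γ : ℝ} (ha : 0 ≤ a) (hb : 0 ≤ b) (hγ : 1 ≤ γ) :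
    |a ^ γ - b ^ γ| ≤ γ * (a ^ (γ - 1) + b ^ (γ - 1)) * |a - b| := by
  have h1 := Real.rpow_nonneg ha (γ - 1)
  have h2 := Real.rpow_nonneg hb (γ - 1)
  rcases le_total b a with h | h
  · rw [abs_of_nonneg (sub_nonneg.2 (Real.rpow_le_rpow hb h (by linarith))),
      abs_of_nonneg (sub_nonneg.2 h)]
    refine (rpow_diff_le_aux hb h hγ).trans ?_
    have : 0 ≤ a - b := sub_nonneg.2 h
    gcongr; linarith
  · rw [abs_sub_comm, abs_sub_comm a,
      abs_of_nonneg (sub_nonneg.2 (Real.rpow_le_rpow ha h (by linarith))),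
      abs_of_nonneg (sub_nonneg.2 h)]
    refine (rpow_diff_le_aux ha h hγ).trans ?_
    have : 0 ≤ b - a := sub_nonneg.2 h
    gcongr; linarith

/-- Edge energy (every edge counted once). -/
def zEn (N : ℕ) (u : (Fin N → ℤ) → ℝ) : ℝ :=
  ∑ i, ∑' x, (u (x + Pi.single i 1) - u x) ^ 2

lemma zEn_nonneg {N : ℕ} (u : (Fin N → ℤ) → ℝ) : 0 ≤ zEn N u :=
  Finset.sum_nonneg fun _ _ => tsum_nonneg fun _ => sq_nonneg _

lemma fs_rpow {ι : Type*} {u : ι → ℝ} (hu : u.support.Finite) {r : ℝ} (hr : r ≠ 0) :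
    (fun x => u x ^ r).support.Finite := by
  refine hu.subset ?_
  intro x hx hx0
  apply hx
  simp only [hx0]
  exact Real.zero_rpow hr

lemma fs_sq {N : ℕ} {u : (Fin N → ℤ) → ℝ} (hu : u.support.Finite) (v : Fin N → ℤ) :
    Summable (fun x => (u (x + v) - u x) ^ 2) := by
  refine summable_of_fs ((finite_support_diff hu v).subset ?_)
  intro x hx hx0
  apply hx
  simp only at hx0
  simp [hx0]

set_option maxHeartbeats 1000000 in
lemma sobolev {N : ℕ} (hN : 3 ≤ N) : ∃ C : ℝ, 0 ≤ C ∧ ∀ u : (Fin N → ℤ) → ℝ, (∀ x, 0 ≤ u x) →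
    u.support.Finite →
    ∑' x, u x ^ (2 * (N : ℝ) / ((N : ℝ) - 2)) ≤ C * zEn N u ^ ((N : ℝ) / ((N : ℝ) - 2)) := by
  have hN' : (3 : ℝ) ≤ N := by exact_mod_cast hN
  set q : ℝ := 2 * (N : ℝ) / ((N : ℝ) - 2) with hq
  have hN2 : (0 : ℝ) < N - 2 := by linarith
  have hq0 : 0 < q := by positivity
  set γ : ℝ := 2 * ((N : ℝ) - 1) / ((N : ℝ) - 2) with hγ
  have hγ1 : 1 ≤ γ := by
    rw [hγ, le_div_iff₀ hN2]; linarith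
  have hγq : 2 * (γ - 1) = q := by rw [hγ, hq]; field_simp; ring
  set D : ℝ := N * (γ * 2) with hD
  have hD0 : 0 ≤ D := by positivity
  refine ⟨D ^ q, Real.rpow_nonneg hD0 _, ?_⟩
  intro u hu0 hu
  set A : ℝ := ∑' x, u x ^ q with hA
  have hA0 : 0 ≤ A := tsum_nonneg fun x => Real.rpow_nonneg (hu0 x) _
  have hE0 := zEn_nonneg u
  have hsq : Summable (fun x => u x ^ q) := summable_of_fs (fs_rpow hu hq0.ne')
  -- Gagliardo
  have hG := gagliardo (by omega : 2 ≤ N) (fun x => u x ^ γ) (fun x => Real.rpow_nonneg (hu0 x) _)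
    (fs_rpow hu (by linarith))
  have hexp : ∀ x, (u x ^ γ) ^ ((N : ℝ) / (N - 1)) = u x ^ q := by
    intro x
    rw [← Real.rpow_mul (hu0 x)]
    congr 1
    have : (N : ℝ) - 1 ≠ 0 := by linarith
    rw [hγ, hq]; field_simp
  simp only [hexp] at hG
  -- each direction
  have hsqi : ∀ x, (u x ^ (γ - 1)) ^ (2 : ℝ) = u x ^ q := by
    intro x
    rw [← Real.rpow_mul (hu0 x), ← hγq]; congr 1; ring
  have hdir : ∀ i : Fin N, ∑' x, |u (x + Pi.single i 1) ^ γ - u x ^ γ| ≤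
      γ * 2 * (A ^ (1 / 2 : ℝ) * zEn N u ^ (1 / 2 : ℝ)) := by
    intro i
    set d : (Fin N → ℤ) → ℝ := fun x => |u (x + Pi.single i 1) - u x| with hd
    have hdsum : Summable (fun x => d x ^ (2 : ℝ)) := by
      simpa [hd, sq_abs] using fs_sq hu (Pi.single i 1)
    have hdE : ∑' x, d x ^ (2 : ℝ) ≤ zEn N u := by
      have : ∑' x, d x ^ (2 : ℝ) = ∑' x, (u (x + Pi.single i 1) - u x) ^ 2 := by
        simp [hd, sq_abs]
      rw [this]
      exact Finset.single_le_sum (f := fun i => ∑' x, (u (x + Pi.single i 1) - u x) ^ 2)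
        (fun _ _ => tsum_nonneg fun _ => sq_nonneg _) (Finset.mem_univ i)
    have hH : ∀ w : Fin N → ℤ, Summable (fun x => u (x + w) ^ (γ - 1) * d x) ∧
        ∑' x, u (x + w) ^ (γ - 1) * d x ≤ A ^ (1 / 2 : ℝ) * zEn N u ^ (1 / 2 : ℝ) := by
      intro w
      have hs1 : Summable (fun x => (u (x + w) ^ (γ - 1)) ^ (2 : ℝ)) := by
        simp only [hsqi]
        exact (Equiv.addRight w).summable_iff.2 hsq
      have ht1 : ∑' x, (u (x + w) ^ (γ - 1)) ^ (2 : ℝ) = A := by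
        simp only [hsqi]
        exact (Equiv.addRight w).tsum_eq (fun x => u x ^ q)
      have h := Real.summable_and_inner_le_Lp_mul_Lq_tsum_of_nonneg
        (Real.HolderConjugate.two_two) (f := fun x => u (x + w) ^ (γ - 1)) (g := d)
        (fun x => Real.rpow_nonneg (hu0 _) _) (fun x => abs_nonneg _) hs1 hdsum
      refine ⟨h.1, h.2.trans ?_⟩
      rw [ht1]
      gcongr
    have h0 := hH 0
    have h1 := hH (Pi.single i 1)
    simp only [add_zero] at h0
    calc ∑' x, |u (x + Pi.single i 1) ^ γ - u x ^ γ|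
        ≤ ∑' x, γ * (u (x + Pi.single i 1) ^ (γ - 1) * d x + u x ^ (γ - 1) * d x) := by
          refine Summable.tsum_le_tsum (fun x => ?_) ?_ ((h1.1.add h0.1).mul_left γ)
          · refine (rpow_diff_le (hu0 _) (hu0 _) hγ1).trans (le_of_eq ?_)
            simp only [hd]; ring
          · exact (summable_of_fs (finite_support_diff (g := fun x => u x ^ γ)
              (fs_rpow hu (by linarith)) _)).abs
      _ = γ * (∑' x, u (x + Pi.single i 1) ^ (γ - 1) * d x + ∑' x, u x ^ (γ - 1) * d x) := by
          rw [tsum_mul_left, h1.1.tsum_add h0.1]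
      _ ≤ γ * (A ^ (1 / 2 : ℝ) * zEn N u ^ (1 / 2 : ℝ) + A ^ (1 / 2 : ℝ) * zEn N u ^ (1 / 2 : ℝ)) := by
          have := h1.2; have := h0.2
          gcongr
      _ = _ := by ring
  have hsum : ∑ i, ∑' x, |u (x + Pi.single i 1) ^ γ - u x ^ γ| ≤
      D * (A ^ (1 / 2 : ℝ) * zEn N u ^ (1 / 2 : ℝ)) := by
    refine (Finset.sum_le_sum fun i _ => hdir i).trans (le_of_eq ?_)
    simp [hD]; ring
  rcases eq_or_lt_of_le hA0 with h | hApos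
  · rw [← h]
    exact mul_nonneg (Real.rpow_nonneg hD0 _) (Real.rpow_nonneg hE0 _)
  set E := zEn N u
  clear_value D
  have hN1 : (0:ℝ) < N - 1 := by linarith
  have hmain : A ≤ (D * (A ^ (1 / 2 : ℝ) * E ^ (1 / 2 : ℝ))) ^ ((N : ℝ) / (N - 1)) := by
    refine hG.trans (Real.rpow_le_rpow ?_ hsum (by positivity))
    exact Finset.sum_nonneg fun i _ => tsum_nonneg fun _ => abs_nonneg _
  -- raise to power
  have hX0 : 0 ≤ D * (A ^ (1 / 2 : ℝ) * E ^ (1 / 2 : ℝ)) := by positivity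
  have hm2 := Real.rpow_le_rpow hA0 hmain (by positivity : (0:ℝ) ≤ γ)
  rw [← Real.rpow_mul hX0] at hm2
  have hpe : (N : ℝ) / (N - 1) * γ = q := by rw [hγ, hq]; field_simp
  rw [hpe, Real.mul_rpow hD0 (by positivity), Real.mul_rpow (by positivity) (by positivity),
    ← Real.rpow_mul hA0, ← Real.rpow_mul hE0] at hm2
  have hpe2 : 1 / 2 * q = (N : ℝ) / (N - 2) := by rw [hq]; field_simp
  have hpe3 : γ = 1 + 1 / 2 * q := by rw [← hγq]; ring
  rw [hpe3, Real.rpow_add hApos, Real.rpow_one] at hm2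
  have hApp : 0 < A ^ (1 / 2 * q) := Real.rpow_pos_of_pos hApos _
  rw [← hpe2]
  have : A * A ^ (1 / 2 * q) ≤ (D ^ q * E ^ (1 / 2 * q)) * A ^ (1 / 2 * q) := by
    linarith
  exact le_of_mul_le_mul_right this hApp


/-! ### Kernel and convolution -/

/-- The Riesz kernel with value zero at the origin. -/
def ker (N : ℕ) (α : ℝ) (z : Fin N → ℤ) : ℝ :=
  if z = 0 then 0 else zDist N z 0 ^ (α - (N : ℝ))

lemma zDist_nonneg' {N : ℕ} (x y : Fin N → ℤ) : 0 ≤ zDist N x y := Real.sqrt_nonneg _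

lemma zDist_pos {N : ℕ} {z : Fin N → ℤ} (hz : z ≠ 0) : 0 < zDist N z 0 := by
  unfold zDist
  apply Real.sqrt_pos.2
  obtain ⟨i, hi⟩ := Function.ne_iff.1 hz
  refine Finset.sum_pos' (fun _ _ => sq_nonneg _) ⟨i, Finset.mem_univ i, ?_⟩
  have : ((z i : ℤ) : ℝ) ≠ 0 := by exact_mod_cast hi
  simp
  positivity

lemma ker_nonneg {N : ℕ} {α : ℝ} (z : Fin N → ℤ) : 0 ≤ ker N α z := by
  unfold ker
  split_ifs
  · exact le_rfl
  · exact Real.rpow_nonneg (zDist_nonneg' _ _) _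

lemma ker_pos {N : ℕ} {α : ℝ} {z : Fin N → ℤ} (hz : z ≠ 0) : 0 < ker N α z := by
  unfold ker
  rw [if_neg hz]
  exact Real.rpow_pos_of_pos (zDist_pos hz) _

lemma ker_zero {N : ℕ} {α : ℝ} : ker N α 0 = 0 := by simp [ker]

lemma ker_neg {N : ℕ} {α : ℝ} (z : Fin N → ℤ) : ker N α (-z) = ker N α z := by
  simp [ker, zDist]

lemma norm_le_zDist {N : ℕ} (z : Fin N → ℤ) : ‖(fun i => (z i : ℝ))‖ ≤ zDist N z 0 := by
  refine (pi_norm_le_iff_of_nonneg (zDist_nonneg' _ _)).2 fun i => ?_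
  unfold zDist
  apply Real.le_sqrt_of_sq_le
  rw [Real.norm_eq_abs, sq_abs]
  refine le_trans (le_of_eq ?_) (Finset.single_le_sum (f := fun i => (((z i - (0 : Fin N → ℤ) i : ℤ)) : ℝ) ^ 2)
    (fun _ _ => sq_nonneg _) (Finset.mem_univ i))
  simp

lemma exists_int_lattice (N : ℕ) : ∃ L : Submodule ℤ (Fin N → ℝ), DiscreteTopology L ∧
    Module.finrank ℤ L = N ∧ ∀ z : Fin N → ℤ, (fun i => (z i : ℝ)) ∈ L := by
  refine ⟨Submodule.span ℤ (Set.range (Pi.basisFun ℝ (Fin N))), inferInstance, ?_, ?_⟩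
  · rw [ZLattice.rank ℝ]; simp
  · intro z
    rw [Module.Basis.mem_span_iff_repr_mem]
    intro i
    exact ⟨z i, by simp⟩

lemma summable_int_of_lattice {N : ℕ} {r : ℝ} (L : Submodule ℤ (Fin N → ℝ)) (h : Summable fun z : L => ‖(z : Fin N → ℝ)‖ ^ r)
  (hmem : ∀ z : Fin N → ℤ, (fun i => (z i : ℝ)) ∈ L)  :
    Summable fun z : Fin N → ℤ => ‖(fun i => (z i : ℝ))‖ ^ r := by
  have hinj : Function.Injective (fun z : Fin N → ℤ => (⟨fun i => (z i : ℝ), hmem z⟩ : L)) := by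
    intro z w hzw
    ext i
    have := congrFun (congrArg Subtype.val hzw) i
    simpa using this
  have h2 := h.comp_injective hinj
  simpa only [Function.comp_def] using h2

lemma summable_lattice {N : ℕ} {r : ℝ} (hr : r < -(N : ℝ)) (L : Submodule ℤ (Fin N → ℝ)) (hL : DiscreteTopology L)
   (hrank : Module.finrank ℤ L = N) : Summable fun z : L => ‖(z : Fin N → ℝ)‖ ^ r := by
  have := ZLattice.summable_norm_rpow L r (hrank.symm ▸ hr)
  exact this

lemma summable_norm_int {N : ℕ} {r : ℝ} (hr : r < -(N : ℝ)) :
    Summable fun z : Fin N → ℤ => ‖(fun i => (z i : ℝ))‖ ^ r := by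
  obtain ⟨L, hL, hrank, hmem⟩ := exists_int_lattice N
  exact summable_int_of_lattice L (summable_lattice hr L hL hrank) hmem

lemma summable_ker {N : ℕ} {α k : ℝ} (hk : 0 < k) (h : (N : ℝ) < (N - α) * k) :
    Summable fun z : Fin N → ℤ => ker N α z ^ k := by
  refine Summable.of_nonneg_of_le (fun z => Real.rpow_nonneg (ker_nonneg z) _) ?_
    (summable_norm_int (N := N) (r := (α - N) * k) (by linarith))
  intro z
  by_cases hz : z = 0
  · rw [hz, ker_zero, Real.zero_rpow hk.ne']
    positivity
  · have hz' : (fun i => (z i : ℝ)) ≠ 0 := by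
      obtain ⟨i, hi⟩ := Function.ne_iff.1 hz
      refine Function.ne_iff.2 ⟨i, ?_⟩
      simpa using hi
    rw [ker, if_neg hz, ← Real.rpow_mul (zDist_nonneg' _ _)]
    refine Real.rpow_le_rpow_of_nonpos (norm_pos_iff.2 hz') (norm_le_zDist z) ?_
    have : (0:ℝ) ≤ N := by positivity
    linarith

/-- Convolution. -/
def cv {N : ℕ} (K f : (Fin N → ℤ) → ℝ) (x : Fin N → ℤ) : ℝ := ∑' y, K (x - y) * f y

/-- The quadratic form of the convolution. -/
def qq {N : ℕ} (K f : (Fin N → ℤ) → ℝ) : ℝ := ∑' x, f x * cv K f x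

lemma rieszConv_eq {N : ℕ} {α : ℝ} (f : (Fin N → ℤ) → ℝ) (x : Fin N → ℤ) :
    rieszConv N α f x = cv (ker N α) f x := by
  unfold rieszConv cv
  refine tsum_congr fun y => ?_
  by_cases h : y = x
  · simp [h, ker_zero]
  · rw [if_neg h, ker, if_neg (sub_ne_zero.2 (Ne.symm h))]
    congr 2
    simp [zDist]

lemma young3 {K a b θ q : ℝ} (hK : 0 ≤ K) (ha : 0 ≤ a) (hb : 0 ≤ b) (hθ : 0 < θ)
    (hθ2 : θ < 1 / 2) :
    K * (a ^ (q * (1 - θ)) * b ^ (q * (1 - θ))) ≤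
      θ * (a ^ q * K ^ (1 / (2 * θ))) + θ * (b ^ q * K ^ (1 / (2 * θ))) +
        (1 - 2 * θ) * (a ^ q * b ^ q) := by
  refine le_trans (le_of_eq ?_) (Real.geom_mean_le_arith_mean3_weighted hθ.le hθ.le
    (by linarith : 0 ≤ 1 - 2 * θ) (by positivity) (by positivity) (by positivity) (by ring))
  have h1 : ∀ c : ℝ, 0 ≤ c → c ^ (q * (1 - θ)) = (c ^ q) ^ θ * (c ^ q) ^ (1 - 2 * θ) := by
    intro c hc
    rw [← Real.rpow_add_of_nonneg (by positivity) hθ.le (by linarith), ← Real.rpow_mul hc]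
    congr 1; ring
  have h2 : K = (K ^ (1 / (2 * θ))) ^ θ * (K ^ (1 / (2 * θ))) ^ θ := by
    rw [← Real.rpow_add_of_nonneg (by positivity) hθ.le hθ.le, ← Real.rpow_mul hK]
    have : 1 / (2 * θ) * (θ + θ) = 1 := by field_simp; ring
    rw [this, Real.rpow_one]
  rw [h1 a ha, h1 b hb, Real.mul_rpow (by positivity) (by positivity),
    Real.mul_rpow (by positivity) (by positivity), Real.mul_rpow (by positivity) (by positivity)]
  nth_rewrite 1 [h2]
  ring

lemma young2 {K a θ q : ℝ} (hK : 0 ≤ K) (ha : 0 ≤ a) (hθ : 0 < θ)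
    (hθ2 : θ < 1 / 2) :
    K ^ (1 / 2 : ℝ) * a ^ (q * (1 - θ)) ≤ K ^ (1 / (2 * θ)) + a ^ q := by
  have h := Real.geom_mean_le_arith_mean2_weighted hθ.le (by linarith : 0 ≤ 1 - θ)
    (Real.rpow_nonneg hK (1 / (2 * θ))) (Real.rpow_nonneg ha q) (by ring)
  rw [← Real.rpow_mul hK, ← Real.rpow_mul ha] at h
  have e : 1 / (2 * θ) * θ = 1 / 2 := by field_simp
  rw [e] at h
  refine h.trans ?_
  have h1 := Real.rpow_nonneg hK (1 / (2 * θ))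
  have h2 := Real.rpow_nonneg ha q
  nlinarith

lemma rpow_split_le {a M p σ : ℝ} (ha : 0 ≤ a) (haM : a ≤ M) (hσ : 0 < σ) (hσp : σ < p) :
    a ^ p ≤ M ^ (p - σ) * a ^ σ := by
  have : a ^ p = a ^ (p - σ) * a ^ σ := by
    rw [← Real.rpow_add_of_nonneg ha (by linarith) hσ.le]; congr 1; ring
  rw [this]
  have := Real.rpow_le_rpow ha haM (by linarith : 0 ≤ p - σ)
  have := Real.rpow_nonneg ha σ
  gcongr

lemma summable_shift {N : ℕ} {h : (Fin N → ℤ) → ℝ} (hh : Summable h) (x : Fin N → ℤ) :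
    Summable (fun y => h (x - y)) := (Equiv.subLeft x).summable_iff.2 hh

lemma tsum_shift {N : ℕ} (h : (Fin N → ℤ) → ℝ) (x : Fin N → ℤ) :
    ∑' y, h (x - y) = ∑' y, h y := (Equiv.subLeft x).tsum_eq h

lemma qq_bound {N : ℕ} {K : (Fin N → ℤ) → ℝ} (hK0 : ∀ z, 0 ≤ K z) (hKe : ∀ z, K (-z) = K z)
    {θ q p : ℝ} (hθ : 0 < θ) (hθ2 : θ < 1 / 2) (hq : 0 < q) (hp : q * (1 - θ) < p)
    (hKs : Summable fun z => K z ^ (1 / (2 * θ)))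
    {u : (Fin N → ℤ) → ℝ} (hu0 : ∀ x, 0 ≤ u x) (hu : u.support.Finite) {M A : ℝ}
    (hM : ∀ x, u x ≤ M) (hA : ∑' x, u x ^ q ≤ A) :
    qq K (fun x => u x ^ p) ≤
      (M ^ (p - q * (1 - θ))) ^ 2 * (2 * A * (∑' z, K z ^ (1 / (2 * θ))) + A ^ 2) := by
  have hσ : 0 < q * (1 - θ) := by apply mul_pos hq; linarith
  have hp0 : p ≠ 0 := by linarith
  have hM0 : 0 ≤ M := (hu0 0).trans (hM 0)
  set κ := ∑' z, K z ^ (1 / (2 * θ)) with hκ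
  have hκ0 : 0 ≤ κ := tsum_nonneg fun z => Real.rpow_nonneg (hK0 z) _
  set T := hu.toFinset with hT
  have hout : ∀ x, x ∉ T → u x = 0 := by
    intro x hx
    by_contra h
    exact hx (by simpa [hT] using h)
  have hS : ∑ x ∈ T, u x ^ q ≤ A := by
    refine le_trans (le_of_eq ?_) hA
    rw [tsum_eq_sum]
    intro x hx; rw [hout x hx, Real.zero_rpow hq.ne']
  have hS0 : 0 ≤ ∑ x ∈ T, u x ^ q := Finset.sum_nonneg fun x _ => Real.rpow_nonneg (hu0 x) _
  have hA0 : 0 ≤ A := hS0.trans hS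
  have hcv : ∀ x, cv K (fun x => u x ^ p) x = ∑ y ∈ T, K (x - y) * u y ^ p := by
    intro x
    unfold cv
    rw [tsum_eq_sum]
    intro y hy; simp only; rw [hout y hy, Real.zero_rpow hp0, mul_zero]
  have hqq : qq K (fun x => u x ^ p) = ∑ x ∈ T, ∑ y ∈ T, K (x - y) * (u x ^ p * u y ^ p) := by
    unfold qq
    rw [tsum_eq_sum (s := T)]
    · refine Finset.sum_congr rfl fun x _ => ?_
      rw [hcv, Finset.mul_sum]
      refine Finset.sum_congr rfl fun y _ => ?_
      ring
    · intro y hy; simp only; rw [hout y hy, Real.zero_rpow hp0, zero_mul]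
  set m := M ^ (p - q * (1 - θ)) with hm
  have hm0 : 0 ≤ m := Real.rpow_nonneg hM0 _
  have hker : ∀ x, ∑ y ∈ T, K (x - y) ^ (1 / (2 * θ)) ≤ κ := by
    intro x
    rw [hκ, ← tsum_shift (fun z => K z ^ (1 / (2 * θ))) x]
    exact (summable_shift hKs x).sum_le_tsum T (fun y _ => Real.rpow_nonneg (hK0 _) _)
  have hdiag : ∑ x ∈ T, ∑ y ∈ T, u x ^ q * K (x - y) ^ (1 / (2 * θ)) ≤ A * κ := by
    calc _ ≤ ∑ x ∈ T, u x ^ q * κ := by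
          refine Finset.sum_le_sum fun x _ => ?_
          rw [← Finset.mul_sum]
          exact mul_le_mul_of_nonneg_left (hker x) (Real.rpow_nonneg (hu0 x) _)
      _ = (∑ x ∈ T, u x ^ q) * κ := by rw [Finset.sum_mul]
      _ ≤ _ := by gcongr
  have hdiag2 : ∑ x ∈ T, ∑ y ∈ T, u y ^ q * K (x - y) ^ (1 / (2 * θ)) ≤ A * κ := by
    rw [Finset.sum_comm]
    refine le_trans (le_of_eq ?_) hdiag
    refine Finset.sum_congr rfl fun x _ => Finset.sum_congr rfl fun y _ => ?_
    rw [← hKe (x - y), neg_sub]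
  have hoff : ∑ x ∈ T, ∑ y ∈ T, u x ^ q * u y ^ q ≤ A ^ 2 := by
    rw [← Finset.sum_mul_sum, sq]
    gcongr
  rw [hqq]
  calc ∑ x ∈ T, ∑ y ∈ T, K (x - y) * (u x ^ p * u y ^ p)
      ≤ ∑ x ∈ T, ∑ y ∈ T, m ^ 2 * (u x ^ q * K (x - y) ^ (1 / (2 * θ)) +
          u y ^ q * K (x - y) ^ (1 / (2 * θ)) + u x ^ q * u y ^ q) := by
        refine Finset.sum_le_sum fun x _ => Finset.sum_le_sum fun y _ => ?_
        have hx := rpow_split_le (hu0 x) (hM x) hσ hp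
        have hy := rpow_split_le (hu0 y) (hM y) hσ hp
        have hY := young3 (q := q) (hK0 (x - y)) (hu0 x) (hu0 y) hθ hθ2
        have n1 := Real.rpow_nonneg (hu0 x) q
        have n2 := Real.rpow_nonneg (hu0 y) q
        have n3 := Real.rpow_nonneg (hK0 (x - y)) (1 / (2 * θ))
        have n4 := Real.rpow_nonneg (hu0 x) (q * (1 - θ))
        have n5 := Real.rpow_nonneg (hu0 y) p
        have n6 := Real.rpow_nonneg (hu0 x) p
        have n7 := hK0 (x - y)
        calc K (x - y) * (u x ^ p * u y ^ p)
            ≤ K (x - y) * ((m * u x ^ (q * (1 - θ))) * (m * u y ^ (q * (1 - θ)))) := by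
              gcongr
          _ = m ^ 2 * (K (x - y) * (u x ^ (q * (1 - θ)) * u y ^ (q * (1 - θ)))) := by ring
          _ ≤ _ := by
              gcongr
              refine hY.trans ?_
              have := mul_nonneg n1 n3
              have := mul_nonneg n2 n3
              have := mul_nonneg n1 n2
              nlinarith
    _ = m ^ 2 * (∑ x ∈ T, ∑ y ∈ T, u x ^ q * K (x - y) ^ (1 / (2 * θ)) +
          ∑ x ∈ T, ∑ y ∈ T, u y ^ q * K (x - y) ^ (1 / (2 * θ)) +
          ∑ x ∈ T, ∑ y ∈ T, u x ^ q * u y ^ q) := by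
        simp only [← Finset.sum_add_distrib]
        rw [Finset.mul_sum]
        refine Finset.sum_congr rfl fun x _ => ?_
        rw [Finset.mul_sum]
    _ ≤ m ^ 2 * (A * κ + A * κ + A ^ 2) := by gcongr
    _ = _ := by ring

lemma tight_aux {ι : Type*} {c : ι → ℝ} (hc0 : ∀ i, 0 ≤ c i) {v : ι → ℝ} (hv : ∀ i, 0 ≤ v i) {B : ℝ}
    (hB : ∀ F : Finset ι, ∑ i ∈ F, v i ≤ B) {ε : ℝ} (hε : 0 < ε) {F : Finset ι}
    (hF : ∀ i, i ∉ F → c i ≤ ε) :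
    Summable (fun i => c i * v i) ∧ |∑' i, c i * v i - ∑ i ∈ F, c i * v i| ≤ ε * B := by
  classical
  have hG : ∀ G : Finset ι, ∑ i ∈ G, c i * v i ≤ ∑ i ∈ F, c i * v i + ε * B := by
    intro G
    calc ∑ i ∈ G, c i * v i ≤ ∑ i ∈ F ∪ (G \ F), c i * v i := by
          refine Finset.sum_le_sum_of_subset_of_nonneg ?_ (fun i _ _ => mul_nonneg (hc0 i) (hv i))
          intro i hi
          by_cases h : i ∈ F <;> simp [h, hi]
      _ = ∑ i ∈ F, c i * v i + ∑ i ∈ G \ F, c i * v i :=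
          Finset.sum_union Finset.disjoint_sdiff
      _ ≤ ∑ i ∈ F, c i * v i + ∑ i ∈ G \ F, ε * v i := by
          gcongr with i hi
          · exact hv i
          · exact hF i (Finset.mem_sdiff.1 hi).2
      _ ≤ _ := by
          rw [← Finset.mul_sum]
          gcongr
          exact hB _
  have hs : Summable (fun i => c i * v i) :=
    summable_of_sum_le (fun i => mul_nonneg (hc0 i) (hv i)) hG
  refine ⟨hs, ?_⟩
  have h1 := hs.sum_le_tsum F (fun i _ => mul_nonneg (hc0 i) (hv i))
  have h2 := hs.tsum_le_of_sum_le hG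
  rw [abs_of_nonneg (by linarith)]
  linarith

lemma tendsto_tsum_of_tight {ι : Type*} {c : ι → ℝ} (hc0 : ∀ i, 0 ≤ c i)
    (hc : Tendsto c cofinite (𝓝 0)) {w : ℕ → ι → ℝ} {w' : ι → ℝ} (hw0 : ∀ n i, 0 ≤ w n i) {B : ℝ}
    (hB : ∀ n (F : Finset ι), ∑ i ∈ F, w n i ≤ B)
    (hlim : ∀ i, Tendsto (fun n => w n i) atTop (𝓝 (w' i))) :
    Summable (fun i => c i * w' i) ∧
    Tendsto (fun n => ∑' i, c i * w n i) atTop (𝓝 (∑' i, c i * w' i)) := by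
  have hw'0 : ∀ i, 0 ≤ w' i := fun i => ge_of_tendsto' (hlim i) (fun n => hw0 n i)
  have hB' : ∀ F : Finset ι, ∑ i ∈ F, w' i ≤ B := fun F =>
    le_of_tendsto' (tendsto_finsetSum F fun i _ => hlim i) (fun n => hB n F)
  have hB0 : 0 ≤ B := by simpa using hB 0 ∅
  have hFε : ∀ ε > 0, ∃ F : Finset ι, ∀ i, i ∉ F → c i ≤ ε := by
    intro ε hε
    have h1 := hc.eventually (gt_mem_nhds hε)
    rw [Filter.eventually_cofinite] at h1
    refine ⟨h1.toFinset, fun i hi => ?_⟩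
    simp at hi
    exact hi.le
  refine ⟨?_, ?_⟩
  · obtain ⟨F, hF⟩ := hFε 1 one_pos
    exact (tight_aux hc0 hw'0 hB' one_pos hF).1
  rw [Metric.tendsto_atTop]
  intro ε hε
  set η := ε / (4 * (B + 1)) with hη
  have hη0 : 0 < η := by positivity
  have hηB : η * B ≤ ε / 4 := by
    have : η * (B + 1) = ε / 4 := by rw [hη]; field_simp
    nlinarith
  obtain ⟨F, hF⟩ := hFε η hη0
  have hfin : Tendsto (fun n => ∑ i ∈ F, c i * w n i) atTop (𝓝 (∑ i ∈ F, c i * w' i)) :=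
    tendsto_finsetSum F fun i _ => (hlim i).const_mul (c i)
  obtain ⟨n0, hn0⟩ := Metric.tendsto_atTop.1 hfin (ε / 4) (by positivity)
  refine ⟨n0, fun n hn => ?_⟩
  have h1 := hn0 n hn
  have h2 := (tight_aux hc0 (hw0 n) (hB n) hη0 hF).2
  have h3 := (tight_aux hc0 hw'0 hB' hη0 hF).2
  rw [Real.dist_eq] at h1 ⊢
  rw [abs_lt] at h1 ⊢
  rw [abs_le] at h2 h3
  constructor <;> linarith

lemma cv_tendsto {N : ℕ} {K : (Fin N → ℤ) → ℝ} (hK0 : ∀ z, 0 ≤ K z)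
    {θ q p : ℝ} (hθ : 0 < θ) (hθ2 : θ < 1 / 2) (hq : 0 < q) (hp : q * (1 - θ) < p)
    (hKs : Summable fun z => K z ^ (1 / (2 * θ)))
    {u : ℕ → (Fin N → ℤ) → ℝ} {u' : (Fin N → ℤ) → ℝ} (hu0 : ∀ n x, 0 ≤ u n x) {M A : ℝ}
    (hM : ∀ n x, u n x ≤ M) (hA : ∀ n (F : Finset (Fin N → ℤ)), ∑ x ∈ F, u n x ^ q ≤ A)
    (hlim : ∀ x, Tendsto (fun n => u n x) atTop (𝓝 (u' x))) (x : Fin N → ℤ) :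
    Summable (fun y => K (x - y) * u' y ^ p) ∧
    Tendsto (fun n => cv K (fun y => u n y ^ p) x) atTop (𝓝 (cv K (fun y => u' y ^ p) x)) := by
  have hσ : 0 < q * (1 - θ) := by apply mul_pos hq; linarith
  have hM0 : 0 ≤ M := (hu0 0 0).trans (hM 0 0)
  set m := M ^ (p - q * (1 - θ)) with hm
  have hm0 : 0 ≤ m := Real.rpow_nonneg hM0 _
  set κ := ∑' z, K z ^ (1 / (2 * θ)) with hκ
  set c : (Fin N → ℤ) → ℝ := fun y => K (x - y) ^ (1 / 2 : ℝ) with hc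
  have hc0 : ∀ y, 0 ≤ c y := fun y => Real.rpow_nonneg (hK0 _) _
  have hcc : ∀ y b, K (x - y) * b = c y * (c y * b) := by
    intro y b
    rw [← mul_assoc, hc]
    simp only
    rw [← Real.rpow_add_of_nonneg (hK0 _) (by norm_num) (by norm_num)]
    norm_num
  have hclim : Tendsto c cofinite (𝓝 0) := by
    have h1 := (summable_shift hKs x).tendsto_cofinite_zero
    have h2 := h1.rpow_const (p := θ) (Or.inr hθ.le)
    rw [Real.zero_rpow hθ.ne'] at h2
    refine h2.congr fun y => ?_
    rw [← Real.rpow_mul (hK0 _), hc]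
    congr 1; field_simp
  have key := tendsto_tsum_of_tight hc0 hclim (w := fun n y => c y * u n y ^ p)
    (w' := fun y => c y * u' y ^ p) (fun n y => mul_nonneg (hc0 y) (Real.rpow_nonneg (hu0 n y) _))
    (B := m * (κ + A)) ?_ ?_
  · simpa only [cv, hcc] using key
  · intro n F
    calc ∑ y ∈ F, c y * u n y ^ p ≤ ∑ y ∈ F, m * (K (x - y) ^ (1 / (2 * θ)) + u n y ^ q) := by
          refine Finset.sum_le_sum fun y _ => ?_
          calc c y * u n y ^ p ≤ c y * (m * u n y ^ (q * (1 - θ))) :=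
                mul_le_mul_of_nonneg_left (rpow_split_le (hu0 n y) (hM n y) hσ hp) (hc0 y)
            _ = m * (c y * u n y ^ (q * (1 - θ))) := by ring
            _ ≤ _ := mul_le_mul_of_nonneg_left (young2 (hK0 _) (hu0 n y) hθ hθ2) hm0
      _ = m * (∑ y ∈ F, K (x - y) ^ (1 / (2 * θ)) + ∑ y ∈ F, u n y ^ q) := by
          rw [← Finset.mul_sum, Finset.sum_add_distrib]
      _ ≤ _ := by
          refine mul_le_mul_of_nonneg_left (add_le_add ?_ (hA n F)) hm0
          rw [hκ, ← tsum_shift (fun z => K z ^ (1 / (2 * θ))) x]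
          exact (summable_shift hKs x).sum_le_tsum F (fun y _ => Real.rpow_nonneg (hK0 _) _)
  · intro y
    exact ((hlim y).rpow_const (Or.inr (by linarith))).const_mul _


/-! ### Expansion, scaling, translation -/

lemma fs_mul_left {ι : Type*} {f : ι → ℝ} (hf : f.support.Finite) (g : ι → ℝ) :
    (fun x => g x * f x).support.Finite := by
  refine hf.subset ?_
  intro x hx hx0
  apply hx
  simp [show f x = 0 from hx0]

lemma fs_mul_right {ι : Type*} {f : ι → ℝ} (hf : f.support.Finite) (g : ι → ℝ) :
    (fun x => f x * g x).support.Finite := by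
  refine hf.subset ?_
  intro x hx hx0
  apply hx
  simp [show f x = 0 from hx0]

/-- The indicator of a point. -/
def dlt {N : ℕ} (x y : Fin N → ℤ) : ℝ := if y = x then 1 else 0

lemma dlt_fs {N : ℕ} (x : Fin N → ℤ) : (dlt x).support.Finite := by
  refine (Set.finite_singleton x).subset ?_
  intro y hy
  by_contra h
  exact hy (if_neg h)

lemma tsum_mul_dlt {N : ℕ} (g : (Fin N → ℤ) → ℝ) (x : Fin N → ℤ) :
    ∑' y, g y * dlt x y = g x := by
  simp [dlt]

lemma zLap_eq {N : ℕ} (u : (Fin N → ℤ) → ℝ) (x : Fin N → ℤ) :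
    zLap N u x = ∑ i, ((u (x + Pi.single i 1) - u x) + (u (x - Pi.single i 1) - u x)) := by
  unfold zLap
  refine Finset.sum_congr rfl fun i _ => ?_
  rw [update_eq_add', sub_eq_add_neg (x i), update_eq_add', Pi.single_neg, ← sub_eq_add_neg]

lemma zGradSq_eq {N : ℕ} (u : (Fin N → ℤ) → ℝ) (x : Fin N → ℤ) :
    zGradSq N u x = ∑ i, ((u (x + Pi.single i 1) - u x) ^ 2 + (u (x - Pi.single i 1) - u x) ^ 2) := by
  unfold zGradSq
  refine Finset.sum_congr rfl fun i _ => ?_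
  rw [update_eq_add', sub_eq_add_neg (x i), update_eq_add', Pi.single_neg, ← sub_eq_add_neg]

lemma zEn_expand {N : ℕ} {u : (Fin N → ℤ) → ℝ} (hu : u.support.Finite) (x : Fin N → ℤ) (t : ℝ) :
    zEn N (fun y => u y + t * dlt x y) = zEn N u + 2 * t * (-zLap N u x) + t ^ 2 * zEn N (dlt x) := by
  rw [zLap_eq]
  unfold zEn
  rw [← Finset.sum_neg_distrib, Finset.mul_sum, Finset.mul_sum, ← Finset.sum_add_distrib,
    ← Finset.sum_add_distrib]
  refine Finset.sum_congr rfl fun i _ => ?_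
  set e : Fin N → ℤ := Pi.single i 1
  have s1 := fs_sq hu e
  have s2 := fs_sq (dlt_fs x) e
  have s3 : Summable (fun y => (u (y + e) - u y) * dlt x (y + e)) :=
    summable_of_fs (fs_mul_left (finite_support_shift (dlt_fs x) e) _)
  have s4 : Summable (fun y => (u (y + e) - u y) * dlt x y) :=
    summable_of_fs (fs_mul_left (dlt_fs x) _)
  have t3 : ∑' y, (u (y + e) - u y) * dlt x (y + e) = u x - u (x - e) := by
    have h := (Equiv.addRight e).tsum_eq (fun y => (u y - u (y - e)) * dlt x y)
    simp only [Equiv.coe_addRight, add_sub_cancel_right] at h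
    rw [h, tsum_mul_dlt (fun y => u y - u (y - e))]
  have t4 : ∑' y, (u (y + e) - u y) * dlt x y = u (x + e) - u x :=
    tsum_mul_dlt (fun y => u (y + e) - u y) x
  have hpt : ∀ y, (u (y + e) + t * dlt x (y + e) - (u y + t * dlt x y)) ^ 2 =
      (u (y + e) - u y) ^ 2 + 2 * t * ((u (y + e) - u y) * dlt x (y + e) -
        (u (y + e) - u y) * dlt x y) + t ^ 2 * (dlt x (y + e) - dlt x y) ^ 2 := by
    intro y; ring
  simp only [hpt]
  rw [(s1.add ((s3.sub s4).mul_left (2 * t))).tsum_add (s2.mul_left _),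
    s1.tsum_add ((s3.sub s4).mul_left (2 * t)), tsum_mul_left, tsum_mul_left, s3.tsum_sub s4, t3, t4]
  ring

lemma qq_expand {N : ℕ} {K : (Fin N → ℤ) → ℝ} (hKe : ∀ z, K (-z) = K z) (hKz : K 0 = 0)
    {f : (Fin N → ℤ) → ℝ} (hf : f.support.Finite) (x : Fin N → ℤ) (c : ℝ) :
    qq K (fun y => f y + c * dlt x y) = qq K f + 2 * c * cv K f x := by
  have hcv : ∀ z, cv K (fun y => f y + c * dlt x y) z = cv K f z + c * K (z - x) := by
    intro z
    unfold cv
    have s1 : Summable (fun y => K (z - y) * f y) := summable_of_fs (fs_mul_left hf _)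
    have s2 : Summable (fun y => K (z - y) * dlt x y) := summable_of_fs (fs_mul_left (dlt_fs x) _)
    have hpt : ∀ y, K (z - y) * (f y + c * dlt x y) = K (z - y) * f y + c * (K (z - y) * dlt x y) := by
      intro y; ring
    simp only [hpt]
    rw [s1.tsum_add (s2.mul_left c), tsum_mul_left, tsum_mul_dlt (fun y => K (z - y))]
  unfold qq
  simp only [hcv]
  have hpt : ∀ z, (f z + c * dlt x z) * (cv K f z + c * K (z - x)) =
      f z * cv K f z + c * (K (x - z) * f z) + c * ((cv K f z + c * K (z - x)) * dlt x z) := by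
    intro z
    rw [← hKe (x - z), neg_sub]; ring
  simp only [hpt]
  have s1 : Summable (fun z => f z * cv K f z) := summable_of_fs (fs_mul_right hf _)
  have s2 : Summable (fun z => K (x - z) * f z) := summable_of_fs (fs_mul_left hf _)
  have s3 : Summable (fun z => (cv K f z + c * K (z - x)) * dlt x z) :=
    summable_of_fs (fs_mul_left (dlt_fs x) _)
  rw [(s1.add (s2.mul_left c)).tsum_add (s3.mul_left c), s1.tsum_add (s2.mul_left c),
    tsum_mul_left, tsum_mul_left, tsum_mul_dlt (fun z => cv K f z + c * K (z - x)), sub_self, hKz]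
  have : ∑' z, K (x - z) * f z = cv K f x := rfl
  rw [this]; ring

lemma rpow_add_dlt {N : ℕ} (u : (Fin N → ℤ) → ℝ) (x : Fin N → ℤ) (t p : ℝ) :
    (fun y => (u y + t * dlt x y) ^ p) =
      fun y => u y ^ p + ((u x + t) ^ p - u x ^ p) * dlt x y := by
  ext y
  by_cases h : y = x
  · subst h; simp [dlt]
  · simp [dlt, h]

lemma zEn_scale {N : ℕ} (u : (Fin N → ℤ) → ℝ) (c : ℝ) :
    zEn N (fun y => c * u y) = c ^ 2 * zEn N u := by
  unfold zEn
  rw [Finset.mul_sum]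
  refine Finset.sum_congr rfl fun i _ => ?_
  rw [← tsum_mul_left]
  refine tsum_congr fun y => ?_
  ring

lemma cv_scale {N : ℕ} (K f : (Fin N → ℤ) → ℝ) (c : ℝ) (x : Fin N → ℤ) :
    cv K (fun y => c * f y) x = c * cv K f x := by
  unfold cv
  rw [← tsum_mul_left]
  refine tsum_congr fun y => ?_
  ring

lemma qq_scale {N : ℕ} (K f : (Fin N → ℤ) → ℝ) (c : ℝ) :
    qq K (fun y => c * f y) = c ^ 2 * qq K f := by
  unfold qq
  rw [← tsum_mul_left]
  refine tsum_congr fun y => ?_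
  rw [cv_scale]; ring

lemma zEn_trans {N : ℕ} (u : (Fin N → ℤ) → ℝ) (v : Fin N → ℤ) :
    zEn N (fun y => u (y + v)) = zEn N u := by
  unfold zEn
  refine Finset.sum_congr rfl fun i _ => ?_
  refine Eq.trans ?_ ((Equiv.addRight v).tsum_eq
    (fun x : Fin N → ℤ => (u (x + Pi.single i 1) - u x) ^ 2))
  refine tsum_congr fun y => ?_
  simp only [Equiv.coe_addRight, add_right_comm]

lemma cv_trans {N : ℕ} (K f : (Fin N → ℤ) → ℝ) (v x : Fin N → ℤ) :
    cv K (fun y => f (y + v)) x = cv K f (x + v) := by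
  unfold cv
  rw [← (Equiv.addRight v).tsum_eq (fun y => K (x + v - y) * f y)]
  refine tsum_congr fun y => ?_
  simp only [Equiv.coe_addRight, add_sub_add_right_eq_sub]

lemma qq_trans {N : ℕ} (K f : (Fin N → ℤ) → ℝ) (v : Fin N → ℤ) :
    qq K (fun y => f (y + v)) = qq K f := by
  unfold qq
  rw [← (Equiv.addRight v).tsum_eq (fun y => f y * cv K f y)]
  refine tsum_congr fun y => ?_
  rw [cv_trans]; rfl

lemma zLap_scale {N : ℕ} (u : (Fin N → ℤ) → ℝ) (c : ℝ) (x : Fin N → ℤ) :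
    zLap N (fun y => c * u y) x = c * zLap N u x := by
  unfold zLap
  rw [Finset.mul_sum]
  refine Finset.sum_congr rfl fun i _ => ?_
  ring

lemma zGradSq_scale {N : ℕ} (u : (Fin N → ℤ) → ℝ) (c : ℝ) (x : Fin N → ℤ) :
    zGradSq N (fun y => c * u y) x = c ^ 2 * zGradSq N u x := by
  unfold zGradSq
  rw [Finset.mul_sum]
  refine Finset.sum_congr rfl fun i _ => ?_
  ring

lemma zGradSq_nonneg {N : ℕ} (u : (Fin N → ℤ) → ℝ) (x : Fin N → ℤ) : 0 ≤ zGradSq N u x :=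
  Finset.sum_nonneg fun _ _ => by positivity

lemma zGradSq_sum {N : ℕ} {u : (Fin N → ℤ) → ℝ} (hu : u.support.Finite) (F : Finset (Fin N → ℤ)) :
    ∑ x ∈ F, zGradSq N u x ≤ 2 * zEn N u := by
  simp only [zGradSq_eq]
  rw [Finset.sum_comm, zEn, Finset.mul_sum]
  refine Finset.sum_le_sum fun i _ => ?_
  set e : Fin N → ℤ := Pi.single i 1
  have s1 := fs_sq hu e
  have s2 : Summable (fun x => (u (x - e) - u x) ^ 2) := by
    simpa only [sub_eq_add_neg] using fs_sq hu (-e)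
  have t2 : ∑' x, (u (x - e) - u x) ^ 2 = ∑' x, (u (x + e) - u x) ^ 2 := by
    rw [← (Equiv.addRight e).tsum_eq (fun x => (u (x - e) - u x) ^ 2)]
    refine tsum_congr fun y => ?_
    simp only [Equiv.coe_addRight, add_sub_cancel_right]
    ring
  rw [Finset.sum_add_distrib]
  have h1 := s1.sum_le_tsum F (fun x _ => sq_nonneg _)
  have h2 := s2.sum_le_tsum F (fun x _ => sq_nonneg _)
  rw [t2] at h2
  linarith

lemma lattice_conn {N : ℕ} (P : (Fin N → ℤ) → Prop)
    (h1 : ∀ x i, P x → P (x + Pi.single i 1)) (h2 : ∀ x i, P x → P (x - Pi.single i 1))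
    (x y : Fin N → ℤ) (hx : P x) : P y := by
  have hsingle : ∀ i (n : ℤ) x, P x → P (x + Pi.single i n) := by
    intro i n
    induction n using Int.induction_on with
    | zero => intro x hx; simpa using hx
    | succ k ih =>
      intro x hx
      rw [Pi.single_add, ← add_assoc]
      exact h1 _ _ (ih x hx)
    | pred k ih =>
      intro x hx
      rw [Pi.single_sub, ← add_sub_assoc]
      exact h2 _ _ (ih x hx)
  have hall : ∀ (v : Fin N → ℤ) (s : Finset (Fin N)) x, P x → P (x + ∑ i ∈ s, Pi.single i (v i)) := by
    intro v s
    induction s using Finset.induction_on with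
    | empty => intro x hx; simpa using hx
    | insert a s ha ih =>
      intro x hx
      rw [Finset.sum_insert ha, ← add_assoc]
      exact ih _ (hsingle _ _ _ hx)
  have h := hall (y - x) Finset.univ x hx
  rw [Finset.univ_sum_single] at h
  simpa using h


/-! ### The maximization problem -/

/-- Bundle of the standing assumptions on the kernel and the exponents. -/
structure Setup (N : ℕ) (K : (Fin N → ℤ) → ℝ) (θ q p C : ℝ) : Prop where
  hN : 0 < N
  hK0 : ∀ z, 0 ≤ K z
  hKe : ∀ z, K (-z) = K z
  hKz : K 0 = 0
  hKp : ∀ z, z ≠ 0 → 0 < K z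
  hθ : 0 < θ
  hθ2 : θ < 1 / 2
  hq : 0 < q
  hp : q * (1 - θ) < p
  hp1 : 1 < p
  hKs : Summable fun z => K z ^ (1 / (2 * θ))
  hC0 : 0 ≤ C
  hC : ∀ u : (Fin N → ℤ) → ℝ, (∀ x, 0 ≤ u x) → u.support.Finite →
    ∑' x, u x ^ q ≤ C * zEn N u ^ (q / 2)

/-- Admissible functions. -/
def Adm {N : ℕ} (u : (Fin N → ℤ) → ℝ) : Prop := (∀ x, 0 ≤ u x) ∧ u.support.Finite

lemma cv_nonneg {N : ℕ} {K f : (Fin N → ℤ) → ℝ} (hK : ∀ z, 0 ≤ K z) (hf : ∀ z, 0 ≤ f z)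
    (x : Fin N → ℤ) : 0 ≤ cv K f x := tsum_nonneg fun y => mul_nonneg (hK _) (hf y)

lemma qq_nonneg {N : ℕ} {K f : (Fin N → ℤ) → ℝ} (hK : ∀ z, 0 ≤ K z) (hf : ∀ z, 0 ≤ f z) :
    0 ≤ qq K f := tsum_nonneg fun y => mul_nonneg (hf y) (cv_nonneg hK hf y)

section
variable {N : ℕ} {K : (Fin N → ℤ) → ℝ} {θ q p C : ℝ}

lemma Setup.sum_le (h : Setup N K θ q p C) {u : (Fin N → ℤ) → ℝ} (hu : Adm u) (hE : zEn N u = 1) :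
    ∑' x, u x ^ q ≤ C := by
  have := h.hC u hu.1 hu.2
  simpa [hE] using this

lemma Setup.finsum_le (h : Setup N K θ q p C) {u : (Fin N → ℤ) → ℝ} (hu : Adm u) (hE : zEn N u = 1)
    (F : Finset (Fin N → ℤ)) : ∑ x ∈ F, u x ^ q ≤ C :=
  ((summable_of_fs (fs_rpow hu.2 h.hq.ne')).sum_le_tsum F
    (fun x _ => Real.rpow_nonneg (hu.1 x) _)).trans (h.sum_le hu hE)

lemma Setup.le_M (h : Setup N K θ q p C) {u : (Fin N → ℤ) → ℝ} (hu : Adm u) (hE : zEn N u = 1)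
    (x : Fin N → ℤ) : u x ≤ C ^ (1 / q) := by
  have h1 := h.finsum_le hu hE {x}
  rw [Finset.sum_singleton] at h1
  have h2 := Real.rpow_le_rpow (Real.rpow_nonneg (hu.1 x) _) h1 (by have := h.hq; positivity : 0 ≤ 1 / q)
  rwa [← Real.rpow_mul (hu.1 x), mul_one_div_cancel h.hq.ne', Real.rpow_one] at h2

lemma Setup.qq_zero (h : Setup N K θ q p C) {u : (Fin N → ℤ) → ℝ} (hu : Adm u) (hE : zEn N u = 0) :
    qq K (fun x => u x ^ p) = 0 := by
  have h1 := h.hC u hu.1 hu.2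
  rw [hE, Real.zero_rpow (by have := h.hq; positivity), mul_zero] at h1
  have hz : ∀ x, u x = 0 := by
    intro x
    have h2 := (summable_of_fs (fs_rpow hu.2 h.hq.ne')).sum_le_tsum {x}
      (fun x _ => Real.rpow_nonneg (hu.1 x) q)
    rw [Finset.sum_singleton] at h2
    have h3 : u x ^ q = 0 := le_antisymm (h2.trans h1) (Real.rpow_nonneg (hu.1 x) _)
    exact (Real.rpow_eq_zero (hu.1 x) h.hq.ne').1 h3
  have hp0 : p ≠ 0 := by have := h.hp1; linarith
  simp [qq, hz, Real.zero_rpow hp0]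

lemma Setup.normalize (_h : Setup N K θ q p C) {u : (Fin N → ℤ) → ℝ} (hu : Adm u)
    (hE : 0 < zEn N u) :
    ∃ w : (Fin N → ℤ) → ℝ, Adm w ∧ zEn N w = 1 ∧
      qq K (fun x => w x ^ p) = qq K (fun x => u x ^ p) / zEn N u ^ p := by
  set e := zEn N u with he
  set c := (Real.sqrt e)⁻¹ with hc
  have hc0 : 0 ≤ c := by positivity
  have hc2 : c ^ 2 = e⁻¹ := by rw [hc, inv_pow, Real.sq_sqrt hE.le]
  refine ⟨fun y => c * u y, ⟨fun x => mul_nonneg hc0 (hu.1 x), fs_mul_left hu.2 _⟩, ?_, ?_⟩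
  · rw [zEn_scale, hc2, ← he, inv_mul_cancel₀ hE.ne']
  · have : (fun x => (c * u x) ^ p) = fun x => c ^ p * u x ^ p := by
      ext x; exact Real.mul_rpow hc0 (hu.1 x)
    rw [this, qq_scale, ← Real.rpow_natCast, ← Real.rpow_mul hc0, mul_comm p, Real.rpow_mul hc0,
      Real.rpow_natCast, hc2, Real.inv_rpow hE.le]
    field_simp

lemma Setup.exists_test (h : Setup N K θ q p C) :
    ∃ u : (Fin N → ℤ) → ℝ, Adm u ∧ 0 < zEn N u ∧ 0 < qq K (fun x => u x ^ p) := by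
  have hp0 : p ≠ 0 := by have := h.hp1; linarith
  set e : Fin N → ℤ := Pi.single ⟨0, h.hN⟩ 1 with he
  have he0 : e ≠ 0 := by simp [he]
  set u : (Fin N → ℤ) → ℝ := fun y => dlt 0 y + 1 * dlt e y with hu
  have hd : ∀ (x y : Fin N → ℤ), 0 ≤ dlt x y := by
    intro x y; unfold dlt; split_ifs <;> norm_num
  have hA : Adm u := by
    refine ⟨fun x => ?_, ?_⟩
    · have := hd 0 x; have := hd e x; simp only [hu]; positivity
    · exact ((dlt_fs 0).union (fs_mul_left (dlt_fs e) _)).subset (Function.support_add _ _)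
  have hq : 0 < qq K (fun x => u x ^ p) := by
    have h1 := rpow_add_dlt (dlt (0 : Fin N → ℤ)) e 1 p
    have h2 : (fun y => dlt (0 : Fin N → ℤ) y ^ p) = dlt 0 := by
      ext y; unfold dlt; split_ifs <;> simp [hp0]
    have h3 : dlt (0 : Fin N → ℤ) e = 0 := if_neg he0
    have h4 : (fun x => u x ^ p) = fun y => dlt (0 : Fin N → ℤ) y + 1 * dlt e y := by
      rw [hu, h1]
      ext y
      rw [h3, Real.zero_rpow hp0, congrFun h2 y]
      simp
    rw [h4, qq_expand h.hKe h.hKz (dlt_fs 0)]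
    have h5 : cv K (dlt 0) e = K e := by
      unfold cv; rw [tsum_mul_dlt (fun y => K (e - y))]; simp
    rw [h5]
    have := qq_nonneg h.hK0 (hd 0)
    have := h.hKp e he0
    linarith
  refine ⟨u, hA, ?_, hq⟩
  rcases (zEn_nonneg u).eq_or_lt with h0 | h0
  · exact absurd (h.qq_zero hA h0.symm) hq.ne'
  · exact h0

lemma Setup.exists_S (h : Setup N K θ q p C) : ∃ S : ℝ, 0 < S ∧
    (∀ u : (Fin N → ℤ) → ℝ, Adm u → qq K (fun x => u x ^ p) ≤ S * zEn N u ^ p) ∧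
    ∀ ε > 0, ∃ u : (Fin N → ℤ) → ℝ, Adm u ∧ zEn N u = 1 ∧ S - ε < qq K (fun x => u x ^ p) := by
  have hp0 : p ≠ 0 := by have := h.hp1; linarith
  set T : Set ℝ := {c | ∀ u : (Fin N → ℤ) → ℝ, Adm u → qq K (fun x => u x ^ p) ≤ c * zEn N u ^ p}
    with hT
  have hne : T.Nonempty := by
    refine ⟨((C ^ (1 / q)) ^ (p - q * (1 - θ))) ^ 2 *
      (2 * C * (∑' z, K z ^ (1 / (2 * θ))) + C ^ 2), fun u hu => ?_⟩
    rcases (zEn_nonneg u).eq_or_lt with h0 | h0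
    · rw [h.qq_zero hu h0.symm, ← h0, Real.zero_rpow hp0, mul_zero]
    · obtain ⟨w, hw, hwE, hwq⟩ := h.normalize hu h0
      rw [← div_le_iff₀ (Real.rpow_pos_of_pos h0 p), ← hwq]
      exact qq_bound h.hK0 h.hKe h.hθ h.hθ2 h.hq h.hp h.hKs hw.1 hw.2 (h.le_M hw hwE) (h.sum_le hw hwE)
  have hlow : ∀ u : (Fin N → ℤ) → ℝ, Adm u → 0 < zEn N u → ∀ c ∈ T,
      qq K (fun x => u x ^ p) / zEn N u ^ p ≤ c := by
    intro u hu hE c hc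
    rw [div_le_iff₀ (Real.rpow_pos_of_pos hE p)]
    exact hc u hu
  obtain ⟨u0, hu0, hE0, hq0⟩ := h.exists_test
  have hbdd : BddBelow T := ⟨_, fun c hc => hlow u0 hu0 hE0 c hc⟩
  have hS0 : 0 < sInf T :=
    lt_of_lt_of_le (div_pos hq0 (Real.rpow_pos_of_pos hE0 p)) (le_csInf hne (hlow u0 hu0 hE0))
  refine ⟨sInf T, hS0, ?_, ?_⟩
  · intro u hu
    rcases (zEn_nonneg u).eq_or_lt with h0 | h0
    · rw [h.qq_zero hu h0.symm, ← h0, Real.zero_rpow hp0, mul_zero]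
    · rw [← div_le_iff₀ (Real.rpow_pos_of_pos h0 p)]
      exact le_csInf hne (hlow u hu h0)
  · intro ε hε
    have hnot : sInf T - ε ∉ T := notMem_of_lt_csInf (by linarith) hbdd
    simp only [hT, Set.mem_ofPred_eq, not_forall, not_le] at hnot
    obtain ⟨u, hu, hlt⟩ := hnot
    rcases (zEn_nonneg u).eq_or_lt with h0 | h0
    · rw [h.qq_zero hu h0.symm, ← h0, Real.zero_rpow hp0, mul_zero] at hlt
      exact absurd hlt (lt_irrefl _)
    · obtain ⟨w, hw, hwE, hwq⟩ := h.normalize hu h0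
      refine ⟨w, hw, hwE, ?_⟩
      rw [hwq, lt_div_iff₀ (Real.rpow_pos_of_pos h0 p)]
      exact hlt

lemma Setup.nonvanish (h : Setup N K θ q p C) {S : ℝ} (hS : 0 < S) : ∃ c : ℝ, 0 < c ∧
    ∀ u : (Fin N → ℤ) → ℝ, Adm u → zEn N u = 1 → S / 2 < qq K (fun x => u x ^ p) → ∃ x, c ≤ u x := by
  set R := 2 * C * (∑' z, K z ^ (1 / (2 * θ))) + C ^ 2 with hR
  have hκ0 : 0 ≤ ∑' z, K z ^ (1 / (2 * θ)) := tsum_nonneg fun z => Real.rpow_nonneg (h.hK0 z) _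
  have hC0 := h.hC0
  have hR0 : 0 ≤ R := by positivity
  have hd : 0 < p - q * (1 - θ) := sub_pos.2 h.hp
  set b := S / (2 * (R + 1)) with hb
  have hb0 : 0 < b := by positivity
  refine ⟨b ^ (1 / (2 * (p - q * (1 - θ)))), Real.rpow_pos_of_pos hb0 _, ?_⟩
  intro u hu hE hq
  by_contra hcon
  push Not at hcon
  have h1 := qq_bound h.hK0 h.hKe h.hθ h.hθ2 h.hq h.hp h.hKs hu.1 hu.2 (fun x => (hcon x).le)
    (h.sum_le hu hE)
  rw [← hR, ← Real.rpow_natCast, ← Real.rpow_mul hb0.le, ← Real.rpow_mul hb0.le] at h1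
  have e : 1 / (2 * (p - q * (1 - θ))) * (p - q * (1 - θ)) * ((2 : ℕ) : ℝ) = 1 := by
    push_cast
    field_simp
  rw [e, Real.rpow_one] at h1
  have h2 : b * (R + 1) = S / 2 := by rw [hb]; field_simp
  nlinarith

lemma Setup.exists_seq (h : Setup N K θ q p C) : ∃ S c : ℝ, 0 < S ∧ 0 < c ∧
    (∀ u : (Fin N → ℤ) → ℝ, Adm u → qq K (fun x => u x ^ p) ≤ S * zEn N u ^ p) ∧
    ∃ v : ℕ → (Fin N → ℤ) → ℝ, (∀ n, Adm (v n)) ∧ (∀ n, zEn N (v n) = 1) ∧ (∀ n, c ≤ v n 0) ∧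
      Tendsto (fun n => qq K (fun x => v n x ^ p)) atTop (𝓝 S) := by
  obtain ⟨S, hS, hSup, happ⟩ := h.exists_S
  obtain ⟨c, hc, hnv⟩ := h.nonvanish hS
  refine ⟨S, c, hS, hc, hSup, ?_⟩
  have hex : ∀ n : ℕ, ∃ w : (Fin N → ℤ) → ℝ, Adm w ∧ zEn N w = 1 ∧ c ≤ w 0 ∧
      S - (S / 2) * (1 / ((n : ℝ) + 1)) ≤ qq K (fun x => w x ^ p) := by
    intro n
    have hn : (0 : ℝ) < 1 / ((n : ℝ) + 1) := by positivity
    have hn1 : 1 / ((n : ℝ) + 1) ≤ 1 := by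
      rw [div_le_one (by positivity)]
      have : (0 : ℝ) ≤ n := by positivity
      linarith
    obtain ⟨u, hu, hE, hlt⟩ := happ ((S / 2) * (1 / ((n : ℝ) + 1))) (by positivity)
    obtain ⟨x, hx⟩ := hnv u hu hE (by nlinarith)
    refine ⟨fun y => u (y + x), ⟨fun y => hu.1 _, finite_support_shift hu.2 x⟩, ?_, ?_, ?_⟩
    · rw [zEn_trans, hE]
    · simpa using hx
    · rw [qq_trans K (fun y => u y ^ p) x]; exact hlt.le
  choose v hv using hex
  refine ⟨v, fun n => (hv n).1, fun n => (hv n).2.1, fun n => (hv n).2.2.1, ?_⟩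
  refine tendsto_of_tendsto_of_tendsto_of_le_of_le
    (g := fun n : ℕ => S - (S / 2) * (1 / ((n : ℝ) + 1))) (h := fun _ => S) ?_ tendsto_const_nhds
    (fun n => (hv n).2.2.2) (fun n => ?_)
  · have := (tendsto_one_div_add_atTop_nhds_zero_nat (𝕜 := ℝ)).const_mul (S / 2)
    simpa using (this.const_sub S)
  · have := hSup (v n) (hv n).1
    simpa [(hv n).2.1] using this

/-- Passage to the limit. -/
lemma Setup.exists_limit (h : Setup N K θ q p C) : ∃ (S : ℝ) (u : (Fin N → ℤ) → ℝ), 0 < S ∧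
    (∀ x, 0 ≤ u x) ∧ 0 < u 0 ∧ (Summable fun x => u x ^ q) ∧ Summable (zGradSq N u) ∧
    ∀ x t, (u x = 0 → 0 ≤ t) → (0 < u x → -u x < t) →
      0 ≤ 1 + 2 * t * (-zLap N u x) + t ^ 2 * zEn N (dlt x) ∧
      S + 2 * ((u x + t) ^ p - u x ^ p) * cv K (fun y => u y ^ p) x ≤
        S * (1 + 2 * t * (-zLap N u x) + t ^ 2 * zEn N (dlt x)) ^ p := by
  obtain ⟨S, c, hS, hc, hSup, v, hvA, hvE, hvc, hvq⟩ := h.exists_seq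
  have hp0 : 0 < p := by have := h.hp1; linarith
  set M := C ^ (1 / q)
  have hcomp : IsCompact (Set.univ.pi fun _ : Fin N → ℤ => Set.Icc (0 : ℝ) M) :=
    isCompact_univ_pi fun _ => isCompact_Icc
  obtain ⟨u, -, φ, hφ, hlim⟩ := hcomp.tendsto_subseq (x := v)
    (fun n x _ => ⟨(hvA n).1 x, h.le_M (hvA n) (hvE n) x⟩)
  have hl : ∀ x, Tendsto (fun n => v (φ n) x) atTop (𝓝 (u x)) := fun x =>
    (tendsto_pi_nhds.1 hlim) x
  have hu0 : ∀ x, 0 ≤ u x := fun x => ge_of_tendsto' (hl x) fun n => (hvA _).1 x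
  have hlap : ∀ x, Tendsto (fun n => zLap N (v (φ n)) x) atTop (𝓝 (zLap N u x)) := by
    intro x
    unfold zLap
    refine tendsto_finsetSum _ fun i _ => ?_
    exact ((hl _).sub (hl _)).add ((hl _).sub (hl _))
  have hgr : ∀ x, Tendsto (fun n => zGradSq N (v (φ n)) x) atTop (𝓝 (zGradSq N u x)) := by
    intro x
    unfold zGradSq
    refine tendsto_finsetSum _ fun i _ => ?_
    exact (((hl _).sub (hl _)).pow 2).add (((hl _).sub (hl _)).pow 2)
  refine ⟨S, u, hS, hu0, lt_of_lt_of_le hc (ge_of_tendsto' (hl 0) fun n => hvc _), ?_, ?_, ?_⟩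
  · refine summable_of_sum_le (fun x => Real.rpow_nonneg (hu0 x) _) (c := C) fun F => ?_
    exact le_of_tendsto' (tendsto_finsetSum F fun x _ => (hl x).rpow_const (Or.inr h.hq.le))
      fun n => h.finsum_le (hvA _) (hvE _) F
  · refine summable_of_sum_le (fun x => zGradSq_nonneg u x) (c := 2) fun F => ?_
    refine le_of_tendsto' (tendsto_finsetSum F fun x _ => hgr x) fun n => ?_
    have := zGradSq_sum (hvA (φ n)).2 F
    rwa [hvE, mul_one] at this
  · intro x t ht1 ht2
    have hcv := (cv_tendsto h.hK0 h.hθ h.hθ2 h.hq h.hp h.hKs (fun n => (hvA (φ n)).1)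
      (fun n => h.le_M (hvA _) (hvE _)) (fun n => h.finsum_le (hvA _) (hvE _)) hl x).2
    have hexp : ∀ n, zEn N (fun y => v (φ n) y + t * dlt x y) =
        1 + 2 * t * (-zLap N (v (φ n)) x) + t ^ 2 * zEn N (dlt x) := by
      intro n
      rw [zEn_expand (hvA _).2, hvE]
    have hElim : Tendsto (fun n => 1 + 2 * t * (-zLap N (v (φ n)) x) + t ^ 2 * zEn N (dlt x)) atTop
        (𝓝 (1 + 2 * t * (-zLap N u x) + t ^ 2 * zEn N (dlt x))) :=
      (((hlap x).neg.const_mul (2 * t)).const_add 1).add_const _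
    refine ⟨ge_of_tendsto' hElim fun n => by rw [← hexp]; exact zEn_nonneg _, ?_⟩
    have hnn : ∀ᶠ n in atTop, 0 ≤ v (φ n) x + t := by
      rcases (hu0 x).eq_or_lt with h0 | h0
      · exact Eventually.of_forall fun n => add_nonneg ((hvA _).1 x) (ht1 h0.symm)
      · have := (hl x).eventually (lt_mem_nhds (show -t < u x by linarith [ht2 h0]))
        filter_upwards [this] with n hn
        linarith
    have hLlim : Tendsto (fun n => qq K (fun y => v (φ n) y ^ p) +
        2 * ((v (φ n) x + t) ^ p - v (φ n) x ^ p) * cv K (fun y => v (φ n) y ^ p) x) atTop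
        (𝓝 (S + 2 * ((u x + t) ^ p - u x ^ p) * cv K (fun y => u y ^ p) x)) := by
      refine (hvq.comp hφ.tendsto_atTop).add (Tendsto.mul (Tendsto.const_mul 2 ?_) hcv)
      exact (((hl x).add_const t).rpow_const (Or.inr hp0.le)).sub ((hl x).rpow_const (Or.inr hp0.le))
    refine le_of_tendsto_of_tendsto hLlim ((hElim.rpow_const (Or.inr hp0.le)).const_mul S) ?_
    filter_upwards [hnn] with n hn
    have hadm : Adm (fun y => v (φ n) y + t * dlt x y) := by
      refine ⟨fun y => ?_, ?_⟩
      · by_cases hy : y = x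
        · subst hy; simpa [dlt] using hn
        · simpa [dlt, hy] using (hvA (φ n)).1 y
      · exact ((hvA (φ n)).2.union (fs_mul_left (dlt_fs x) _)).subset (Function.support_add _ _)
    have hfin := hSup _ hadm
    rw [rpow_add_dlt, qq_expand h.hKe h.hKz (fs_rpow (hvA _).2 hp0.ne'), hexp] at hfin
    exact hfin

lemma Setup.exists_sol (h : Setup N K θ q p C) : ∃ (S : ℝ) (u : (Fin N → ℤ) → ℝ), 0 < S ∧
    (∀ x, 0 < u x) ∧ (Summable fun x => u x ^ q) ∧ Summable (zGradSq N u) ∧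
    ∀ x, S * zLap N u x + cv K (fun y => u y ^ p) x * u x ^ (p - 1) = 0 := by
  obtain ⟨S, u, hS, hu0, hu00, hs1, hs2, hineq⟩ := h.exists_limit
  have hp0 : 0 < p := by have := h.hp1; linarith
  have hcv0 : ∀ x, 0 ≤ cv K (fun y => u y ^ p) x := fun x =>
    cv_nonneg h.hK0 (fun z => Real.rpow_nonneg (hu0 z) _) x
  have hpropag : ∀ x, u x = 0 → ∀ i, u (x + Pi.single i 1) = 0 ∧ u (x - Pi.single i 1) = 0 := by
    intro x hx
    have hlap : zLap N u x ≤ 0 := by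
      by_contra hpos
      push Not at hpos
      set d := zEn N (dlt x)
      have hd : 0 ≤ d := zEn_nonneg _
      set t := zLap N u x / (d + 1) with ht
      have ht0 : 0 < t := by positivity
      have htd : t * (d + 1) = zLap N u x := by rw [ht]; field_simp
      obtain ⟨h1, h2⟩ := hineq x t (fun _ => ht0.le) (fun h => absurd hx h.ne')
      have hlt : 1 + 2 * t * (-zLap N u x) + t ^ 2 * d < 1 := by nlinarith
      have h3 := Real.rpow_lt_one h1 hlt hp0
      have h4 : 0 ≤ 2 * ((u x + t) ^ p - u x ^ p) * cv K (fun y => u y ^ p) x := by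
        refine mul_nonneg (mul_nonneg (by norm_num) (sub_nonneg.2 ?_)) (hcv0 x)
        exact Real.rpow_le_rpow (hu0 x) (by linarith) hp0.le
      nlinarith
    rw [zLap_eq] at hlap
    simp only [hx, sub_zero] at hlap
    have hz := (Finset.sum_eq_zero_iff_of_nonneg
      (fun i _ => add_nonneg (hu0 (x + Pi.single i 1)) (hu0 (x - Pi.single i 1)))).1
      (le_antisymm hlap (Finset.sum_nonneg fun i _ => add_nonneg (hu0 _) (hu0 _)))
    intro i
    have h1 := hz i (Finset.mem_univ i)
    have h2 := hu0 (x + Pi.single i 1)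
    have h3 := hu0 (x - Pi.single i 1)
    constructor <;> linarith
  have hpos : ∀ x, 0 < u x := by
    intro x
    rcases (hu0 x).eq_or_lt with h0 | h0
    · have := lattice_conn (fun x => u x = 0) (fun x i hx => (hpropag x hx i).1)
        (fun x i hx => (hpropag x hx i).2) x 0 h0.symm
      exact absurd this hu00.ne'
    · exact h0
  refine ⟨S, u, hS, hpos, hs1, hs2, ?_⟩
  intro x
  set b := cv K (fun y => u y ^ p) x with hb
  set a := -zLap N u x with ha
  set d := zEn N (dlt x) with hd
  set m := u x with hm
  have hm0 : 0 < m := hpos x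
  let g : ℝ → ℝ := fun t => S * (1 + 2 * t * a + t ^ 2 * d) ^ p - 2 * ((m + t) ^ p - m ^ p) * b
  have hmin : IsLocalMin g 0 := by
    have : ∀ᶠ t in 𝓝 (0 : ℝ), -m < t := lt_mem_nhds (by linarith)
    filter_upwards [this] with t ht
    have h2 := (hineq x t (fun h0 => absurd h0 hm0.ne') (fun _ => ht)).2
    have h0 : g 0 = S := by simp [g]
    rw [h0]
    simp only [g]
    linarith
  have hder : HasDerivAt g (S * (2 * a * p) - 2 * (p * m ^ (p - 1)) * b) 0 := by
    have i1 : HasDerivAt (fun t : ℝ => 1 + 2 * t * a + t ^ 2 * d) (2 * a) 0 := by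
      have e1 := (((hasDerivAt_id (0 : ℝ)).const_mul 2).mul_const a).const_add 1
      have e2 := (hasDerivAt_pow 2 (0 : ℝ)).mul_const d
      refine (e1.add e2).congr_deriv ?_
      simp
    have i2 := (i1.rpow_const (p := p) (Or.inl (by norm_num))).const_mul S
    have i3 : HasDerivAt (fun t : ℝ => m + t) 1 0 := (hasDerivAt_id (0 : ℝ)).const_add m
    have i4 := (((i3.rpow_const (p := p) (Or.inl (by simpa using hm0.ne'))).sub_const
      (m ^ p)).const_mul 2).mul_const b
    refine (i2.sub i4).congr_deriv ?_
    simp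
  have hz := hmin.hasDerivAt_eq_zero hder
  have h1 : 2 * p * (S * a - b * m ^ (p - 1)) = 0 := by linarith
  have h2 : S * a - b * m ^ (p - 1) = 0 := by
    rcases mul_eq_zero.1 h1 with h3 | h3
    · linarith
    · exact h3
  rw [ha] at h2
  linarith

end


theorem exists_positive_ground_state_lattice
    (N : ℕ) (hN : 3 ≤ N) (α : ℝ) (hα : 0 < α) (hαN : α < (N : ℝ))
    (p : ℝ) (hp : ((N : ℝ) + α) / ((N : ℝ) - 2) < p) :
    ∃ u : (Fin N → ℤ) → ℝ, zMemD12 N u ∧ (∀ x, 0 < u x) ∧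
      ∀ x, zLap N u x + rieszConv N α (fun y => u y ^ p) x * u x ^ (p - 1) = 0 := by
  have hN3 : (3 : ℝ) ≤ N := by exact_mod_cast hN
  have hN2 : (0 : ℝ) < (N : ℝ) - 2 := by linarith
  obtain ⟨C, hC0, hC⟩ := sobolev hN
  set q : ℝ := 2 * (N : ℝ) / ((N : ℝ) - 2) with hqdef
  have hq : 0 < q := by positivity
  have hlo : ((N : ℝ) + α) / ((N : ℝ) - 2) < q := by
    rw [hqdef]; exact div_lt_div_of_pos_right (by linarith) hN2
  have hp1 : 1 < p := by
    refine lt_trans ?_ hp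
    rw [lt_div_iff₀ hN2]; linarith
  obtain ⟨σ, hσ1, hσ2⟩ := exists_between (lt_min hp hlo)
  have hσp := lt_of_lt_of_le hσ2 (min_le_left _ _)
  have hσq := lt_of_lt_of_le hσ2 (min_le_right _ _)
  set θ : ℝ := 1 - σ / q with hθdef
  have hσθ : q * (1 - θ) = σ := by rw [hθdef]; field_simp; ring
  have hθ : 0 < θ := by
    rw [hθdef, sub_pos, div_lt_one hq]; exact hσq
  have hqN : q * ((N : ℝ) - 2) = 2 * N := by rw [hqdef]; field_simp
  have hNα : (N : ℝ) + α < σ * ((N : ℝ) - 2) := by rwa [div_lt_iff₀ hN2] at hσ1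
  have hθN : 2 * (N : ℝ) * θ < N - α := by
    have : 2 * (N : ℝ) * (1 - θ) = σ * ((N : ℝ) - 2) := by rw [← hqN, ← hσθ]; ring
    linarith
  have hθ2 : θ < 1 / 2 := by nlinarith
  have hset : Setup N (ker N α) θ q p C :=
    { hN := by omega
      hK0 := ker_nonneg
      hKe := ker_neg
      hKz := ker_zero
      hKp := fun z hz => ker_pos hz
      hθ := hθ
      hθ2 := hθ2
      hq := hq
      hp := by rw [hσθ]; exact hσp
      hp1 := hp1
      hKs := by
        refine summable_ker (by positivity) ?_
        rw [mul_one_div, lt_div_iff₀ (by positivity)]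
        linarith
      hC0 := hC0
      hC := by
        have e : q / 2 = (N : ℝ) / ((N : ℝ) - 2) := by rw [hqdef]; field_simp
        rw [e]
        exact hC }
  obtain ⟨S, u, hS, hu, hs1, hs2, heq⟩ := hset.exists_sol
  set c : ℝ := (1 / S) ^ (1 / (2 * p - 2)) with hc
  have hc0 : 0 < c := Real.rpow_pos_of_pos (by positivity) _
  have hcS : c ^ (2 * p - 2) = 1 / S := by
    rw [hc, ← Real.rpow_mul (by positivity), one_div_mul_cancel (by linarith), Real.rpow_one]
  have hcc : c ^ p * c ^ (p - 1) = c / S := by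
    rw [← Real.rpow_add hc0, show p + (p - 1) = 1 + (2 * p - 2) by ring, Real.rpow_add hc0, hcS,
      Real.rpow_one, mul_one_div]
  refine ⟨fun y => c * u y, ⟨?_, ?_⟩, fun x => mul_pos hc0 (hu x), fun x => ?_⟩
  · refine (hs1.mul_left (c ^ q)).congr fun x => ?_
    rw [abs_of_pos (mul_pos hc0 (hu x)), ← hqdef, Real.mul_rpow hc0.le (hu x).le]
  · refine (hs2.mul_left (c ^ 2)).congr fun x => ?_
    rw [zGradSq_scale]
  · have e : (fun y => (c * u y) ^ p) = fun y => c ^ p * u y ^ p := by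
      ext y; exact Real.mul_rpow hc0.le (hu y).le
    rw [zLap_scale, rieszConv_eq, e, cv_scale, Real.mul_rpow hc0.le (hu x).le]
    have h1 := heq x
    have h2 : c ^ p * cv (ker N α) (fun y => u y ^ p) x * (c ^ (p - 1) * u x ^ (p - 1)) =
        (c ^ p * c ^ (p - 1)) * (cv (ker N α) (fun y => u y ^ p) x * u x ^ (p - 1)) := by ring
    rw [h2, hcc]
    have h3 : c * zLap N u x + c / S * (cv (ker N α) (fun y => u y ^ p) x * u x ^ (p - 1)) =
        c / S * (S * zLap N u x + cv (ker N α) (fun y => u y ^ p) x * u x ^ (p - 1)) := by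
      field_simp
    rw [h3, h1, mul_zero]

end ChoquardZ
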